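/- arXiv:2203.02807 — 2 statements merged into one kernel-verified Lean document; each statement's English description precedes it below -/
import Mathlib

section
/- Let $(\Omega, \mathcal{F}, P)$ be a probability space and $Z : \Omega \to \mathbb{R}$ an integrable random variable. Fix $\nu > 0$ and suppose that for every $\lambda > 0$ one has $\log \mathbb{E}_P[\exp(\lambda (Z - \mathbb{E}_P[Z]))] \le \nu \lambda^2 / 2$. Then for every probability measure $Q$ on $(\Omega, \mathcal{F})$ that is absolutely continuous with respect to $P$, such that the Kullback–Leibler divergence $D(Q \,\|\, P)$ is finite and $Z$ is $Q$-integrable, one has $\mathbb{E}_Q[Z] - \mathbb{E}_P[Z] \le \sqrt{2 \nu \, D(Q \,\|\, P)}$. -/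
/-!
The bound is Chernoff's argument read through the Gibbs variational principle. For `f` with
`exp ∘ f` integrable under `P`, nonnegativity of the divergence of `Q` from the exponentially
tilted measure `P.tilted f` says `∫ f dQ ≤ D(Q ‖ P) + log ∫ exp f dP`
(`integral_le_klDiv_add_log_integral_exp`). With `f = t (Z - E_P Z)`, the moment generating
function bound turns this into `t a ≤ D(Q ‖ P) + ν t² / 2` for all `t > 0`, where
`a = E_Q Z - E_P Z`. If `a ≤ 0` the claim is trivial; otherwise the optimal `t = a / ν` gives
`a² ≤ 2 ν D(Q ‖ P)`.
-/

open MeasureTheory Real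

/-- The Kullback–Leibler divergence `D(Q ‖ P) = ∫ log (dQ/dP) dQ` (real-valued). -/
noncomputable def klDiv {Ω : Type*} [MeasurableSpace Ω] (Q P : Measure Ω) : ℝ :=
  ∫ x, Real.log ((Q.rnDeriv P) x).toReal ∂Q

/-- The Donsker–Varadhan inequality: expanding the log-likelihood ratio of `Q` with respect to
`P.tilted f`, it is Gibbs' inequality for these two probability measures. -/
theorem integral_le_klDiv_add_log_integral_exp
    {Ω : Type*} [MeasurableSpace Ω] {P Q : Measure Ω} [IsProbabilityMeasure P]
    [IsProbabilityMeasure Q] (hQP : Q ≪ P) (hQ : Integrable (llr Q P) Q) {f : Ω → ℝ}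
    (hfQ : Integrable f Q) (hfP : Integrable (fun ω => Real.exp (f ω)) P) :
    ∫ ω, f ω ∂Q ≤ klDiv Q P + Real.log (∫ ω, Real.exp (f ω) ∂P) := by
  have := isProbabilityMeasure_tilted hfP
  have hgibbs := InformationTheory.integral_llr_add_sub_measure_univ_nonneg
    (hQP.trans (absolutelyContinuous_tilted hfP))
    (integrable_llr_tilted_right hQP hfQ hQ hfP)
  rw [integral_llr_tilted_right hQP hfQ hfP hQ] at hgibbs
  simp only [probReal_univ] at hgibbs
  have hkl : klDiv Q P = ∫ ω, llr Q P ω ∂Q := rfl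
  linarith

/-- Forward direction of the quadratic cost transportation inequality: a sub-Gaussian
moment generating function bound for `Z` under `P` implies the transportation inequality
`E_Q[Z] - E_P[Z] ≤ √(2 ν D(Q ‖ P))` for all `Q ≪ P` with finite KL divergence. -/
theorem quadratic_cost_transportation_forward
    {Ω : Type*} [MeasurableSpace Ω] (P : Measure Ω) [IsProbabilityMeasure P]
    (Z : Ω → ℝ) (hZ : Integrable Z P) (ν : ℝ) (hν : 0 < ν)
    (hmgf : ∀ t : ℝ, 0 < t →
      Integrable (fun ω => Real.exp (t * (Z ω - ∫ x, Z x ∂P))) P ∧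
      Real.log (∫ ω, Real.exp (t * (Z ω - ∫ x, Z x ∂P)) ∂P) ≤ ν * t ^ 2 / 2) :
    ∀ Q : Measure Ω, IsProbabilityMeasure Q → Q ≪ P →
      Integrable (fun x => Real.log ((Q.rnDeriv P) x).toReal) Q →
      Integrable Z Q →
      ∫ x, Z x ∂Q - ∫ x, Z x ∂P ≤ Real.sqrt (2 * ν * klDiv Q P) := by
  intro Q _ hQP hlog hZQ
  set m := ∫ x, Z x ∂P with hm
  set a := ∫ x, Z x ∂Q - m with ha
  rcases le_or_gt a 0 with ha0 | ha0
  · exact ha0.trans (Real.sqrt_nonneg _)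
  -- `t = a / ν` minimises `ν t² / 2 - t a`.
  · obtain ⟨hint, hbound⟩ := hmgf (a / ν) (div_pos ha0 hν)
    have hdv := integral_le_klDiv_add_log_integral_exp hQP hlog
      (f := fun ω => a / ν * (Z ω - m))
      ((hZQ.sub (integrable_const m)).const_mul (a / ν)) hint
    have hmean : ∫ ω, a / ν * (Z ω - m) ∂Q = a / ν * a := by
      rw [integral_const_mul, integral_sub hZQ (integrable_const m)]
      simp [ha]
    have hle : a / ν * a ≤ klDiv Q P + ν * (a / ν) ^ 2 / 2 := by
      rw [← hmean]
      exact hdv.trans (add_le_add_right hbound _)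
    apply Real.le_sqrt_of_sq_le
    have h1 : a / ν * a = a ^ 2 / ν := by ring
    have h2 : ν * (a / ν) ^ 2 / 2 = a ^ 2 / ν / 2 := by field_simp
    have h3 : a ^ 2 / ν ≤ 2 * klDiv Q P := by rw [h1, h2] at hle; linarith
    rw [div_le_iff₀ hν] at h3
    linarith
end

section
/- Let $(\Omega, \mathcal{F}, P)$ be a probability space and $Z : \Omega \to \mathbb{R}$ an integrable random variable. Fix $\nu > 0$ and suppose that for every probability measure $Q$ on $(\Omega, \mathcal{F})$ absolutely continuous with respect to $P$ with $D(Q \,\|\, P) < \infty$ and $Z$ $Q$-integrable, one has $\mathbb{E}_Q[Z] - \mathbb{E}_P[Z] \le \sqrt{2 \nu \, D(Q \,\|\, P)}$. Then for every $\lambda > 0$, $\log \mathbb{E}_P[\exp(\lambda (Z - \mathbb{E}_P[Z]))] \le \nu \lambda^2 / 2$ (where the expectation may a priori be infinite, in which case the conclusion asserts it is in fact finite and satisfies the bound). -/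
/-!
The relative entropy is dual to the log-moment generating function, and the optimal measure in
the duality is the exponential tilt. Write `Y = t (Z - E_P[Z])`. Since `exp Y` is not known to be
integrable, `P` is tilted by the truncation `min Y n` instead. The tilt has bounded density, so the
transportation inequality applies to it and bounds `log E_P[exp (min Y n)]` by `ν t² / 2`, for
every `n` (`log_integral_exp_le_of_le`). Monotone convergence as `n → ∞` gives both the
integrability of `exp Y` and the bound.
-/

open MeasureTheory Real

/-- Legendre duality against the tilted measure: for `g` bounded above, the tilted measure
`Q = P.tilted g` satisfies `D(Q ‖ P) = E_Q[g] - log E_P[exp g]`. With `g ≤ t (Z - E_P[Z])`, the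
transportation inequality at `Q` combined with `t √(2 ν D) ≤ ν t² / 2 + D` then cancels `D`. -/
lemma log_integral_exp_le_of_le
    {Ω : Type*} [MeasurableSpace Ω] (P : Measure Ω) [IsProbabilityMeasure P]
    (Z : Ω → ℝ) (hZ : Integrable Z P) (ν : ℝ) (hν : 0 < ν)
    (htransport : ∀ Q : Measure Ω, IsProbabilityMeasure Q → Q ≪ P →
      Integrable (fun x => Real.log ((Q.rnDeriv P) x).toReal) Q →
      Integrable Z Q →
      ∫ x, Z x ∂Q - ∫ x, Z x ∂P ≤ Real.sqrt (2 * ν * klDiv Q P))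
    (t : ℝ) (ht : 0 < t) (g : Ω → ℝ) (hg : Integrable g P) (C : ℝ) (hC : ∀ ω, g ω ≤ C)
    (hgZ : ∀ ω, g ω ≤ t * (Z ω - ∫ x, Z x ∂P)) :
    Integrable (fun ω => Real.exp (g ω)) P ∧
      Real.log (∫ ω, Real.exp (g ω) ∂P) ≤ ν * t ^ 2 / 2 := by
  have hem : AEStronglyMeasurable (fun ω => Real.exp (g ω)) P :=
    Real.continuous_exp.comp_aestronglyMeasurable hg.1
  have hbd : ∀ ω, ‖Real.exp (g ω)‖ ≤ Real.exp C := fun ω => by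
    rw [Real.norm_eq_abs, Real.abs_exp]
    exact Real.exp_le_exp.2 (hC ω)
  have hexp : Integrable (fun ω => Real.exp (g ω)) P :=
    .of_bound hem (Real.exp C) (.of_forall hbd)
  refine ⟨hexp, ?_⟩
  set Q := P.tilted g with hQ
  have hprob : IsProbabilityMeasure Q := isProbabilityMeasure_tilted hexp
  have hac : Q ≪ P := tilted_absolutelyContinuous P g
  -- the density `exp g / E_P[exp g]` is bounded, so `P`-integrability passes to `Q`
  have hint : ∀ f : Ω → ℝ, Integrable f P → Integrable f Q := fun f hf => by
    rw [hQ, integrable_tilted_iff hexp]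
    exact hf.bdd_mul hem (.of_forall hbd)
  have hllr : (fun x => Real.log ((Q.rnDeriv P) x).toReal) =ᵐ[Q]
      fun x => g x - Real.log (∫ ω, Real.exp (g ω) ∂P) :=
    hac.ae_le (log_rnDeriv_tilted_left_self hexp)
  have hgQ := hint g hg
  have hZQ := hint Z hZ
  have hllrint : Integrable (fun x => Real.log ((Q.rnDeriv P) x).toReal) Q :=
    (hgQ.sub (integrable_const _)).congr hllr.symm
  have hD : klDiv Q P = ∫ x, g x ∂Q - Real.log (∫ ω, Real.exp (g ω) ∂P) := by
    rw [klDiv, integral_congr_ae hllr, integral_sub hgQ (integrable_const _)]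
    simp
  have hD0 : 0 ≤ klDiv Q P := by
    have h := InformationTheory.toReal_klDiv_of_measure_eq hac (by simp)
    calc (0 : ℝ) ≤ (InformationTheory.klDiv Q P).toReal := ENNReal.toReal_nonneg
      _ = klDiv Q P := h
  have hT := htransport Q hprob hac hllrint hZQ
  have hle : ∫ x, g x ∂Q ≤ t * (∫ x, Z x ∂Q - ∫ x, Z x ∂P) := by
    calc ∫ x, g x ∂Q ≤ ∫ ω, t * (Z ω - ∫ x, Z x ∂P) ∂Q :=
          integral_mono hgQ ((hZQ.sub (integrable_const _)).const_mul t) hgZ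
      _ = t * (∫ x, Z x ∂Q - ∫ x, Z x ∂P) := by
          rw [integral_const_mul, integral_sub hZQ (integrable_const _)]
          simp
  have hmul := mul_le_mul_of_nonneg_left hT ht.le
  have hamgm : t * Real.sqrt (2 * ν * klDiv Q P) ≤ ν * t ^ 2 / 2 + klDiv Q P := by
    -- after squaring, this is `4ab ≤ (a + b)²` with `a = ν t² / 2` and `b = D`
    rw [← Real.sqrt_sq ht.le, ← Real.sqrt_mul (sq_nonneg t), Real.sq_sqrt (sq_nonneg t)]
    apply Real.sqrt_le_iff.2
    refine ⟨by positivity, ?_⟩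
    nlinarith [sq_nonneg (ν * t ^ 2 / 2 - klDiv Q P)]
  linarith

/-- Converse direction of the quadratic cost transportation inequality: if the
transportation inequality `E_Q[Z] - E_P[Z] ≤ √(2 ν D(Q ‖ P))` holds for every probability
measure `Q ≪ P` with finite KL divergence and `Z` `Q`-integrable, then the moment
generating function of `Z - E_P[Z]` under `P` is finite and satisfies the sub-Gaussian
bound `log E_P[exp(t (Z - E_P[Z]))] ≤ ν t² / 2` for every `t > 0`. -/
theorem quadratic_cost_transportation_converse
    {Ω : Type*} [MeasurableSpace Ω] (P : Measure Ω) [IsProbabilityMeasure P]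
    (Z : Ω → ℝ) (hZ : Integrable Z P) (ν : ℝ) (hν : 0 < ν)
    (htransport : ∀ Q : Measure Ω, IsProbabilityMeasure Q → Q ≪ P →
      Integrable (fun x => Real.log ((Q.rnDeriv P) x).toReal) Q →
      Integrable Z Q →
      ∫ x, Z x ∂Q - ∫ x, Z x ∂P ≤ Real.sqrt (2 * ν * klDiv Q P)) :
    ∀ t : ℝ, 0 < t →
      Integrable (fun ω => Real.exp (t * (Z ω - ∫ x, Z x ∂P))) P ∧
      Real.log (∫ ω, Real.exp (t * (Z ω - ∫ x, Z x ∂P)) ∂P) ≤ ν * t ^ 2 / 2 := by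
  intro t ht
  have hY : Integrable (fun ω => t * (Z ω - ∫ x, Z x ∂P)) P :=
    (hZ.sub (integrable_const _)).const_mul t
  set Y : Ω → ℝ := fun ω => t * (Z ω - ∫ x, Z x ∂P) with hYdef
  have htrunc : ∀ n : ℕ, ∫⁻ ω, ENNReal.ofReal (Real.exp (min (Y ω) n)) ∂P
      ≤ ENNReal.ofReal (Real.exp (ν * t ^ 2 / 2)) := fun n => by
    obtain ⟨hi, hl⟩ := log_integral_exp_le_of_le P Z hZ ν hν htransport t ht
      (fun ω => min (Y ω) n) (hY.inf (integrable_const _)) n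
      (fun ω => min_le_right _ _) (fun ω => min_le_left _ _)
    rw [← ofReal_integral_eq_lintegral_ofReal hi (.of_forall fun ω => (Real.exp_pos _).le)]
    exact ENNReal.ofReal_le_ofReal ((Real.log_le_iff_le_exp (integral_exp_pos hi)).1 hl)
  have hexpm : AEStronglyMeasurable (fun ω => Real.exp (Y ω)) P :=
    Real.continuous_exp.comp_aestronglyMeasurable hY.1
  have hlim : ∫⁻ ω, ENNReal.ofReal (Real.exp (Y ω)) ∂P
      ≤ ENNReal.ofReal (Real.exp (ν * t ^ 2 / 2)) := by
    refine le_of_tendsto' (lintegral_tendsto_of_tendsto_of_monotone (μ := P)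
      (f := fun (n : ℕ) ω => ENNReal.ofReal (Real.exp (min (Y ω) n)))
      (fun n => ?_) (.of_forall fun ω => ?_) (.of_forall fun ω => ?_)) htrunc
    · exact (Real.measurable_exp.comp_aemeasurable
        (hY.1.aemeasurable.min aemeasurable_const)).ennreal_ofReal
    · intro n m hnm
      dsimp only
      gcongr
    · -- the truncated sequence is constant as soon as `Y ω ≤ n`
      obtain ⟨N, hN⟩ := exists_nat_ge (Y ω)
      refine tendsto_const_nhds.congr' ?_
      filter_upwards [Filter.eventually_ge_atTop N] with n hn
      rw [min_eq_left (hN.trans (Nat.cast_le.2 hn))]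
  have hi : Integrable (fun ω => Real.exp (Y ω)) P :=
    ⟨hexpm, (hasFiniteIntegral_iff_ofReal (.of_forall fun ω => (Real.exp_pos _).le)).2
      (hlim.trans_lt ENNReal.ofReal_lt_top)⟩
  refine ⟨hi, (Real.log_le_iff_le_exp (integral_exp_pos hi)).2 ?_⟩
  rw [← ofReal_integral_eq_lintegral_ofReal hi (.of_forall fun ω => (Real.exp_pos _).le)] at hlim
  exact (ENNReal.ofReal_le_ofReal_iff (Real.exp_pos _).le).1 hlim
end
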